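/- arXiv:2407.18681 — 5 statements merged into one kernel-verified Lean document; each statement's English description precedes it below -/
import Mathlib

section
/- Let f : ℝ^{d1} → ℝ be μ-strongly convex (μ > 0) and h : ℝ^{d2} → ℝ be convex, F ∈ ℝ^{d2×d1}, and let s > 0 satisfy s²‖F‖² < 1. Let τ_k, σ_k > 0 be step sizes with τ_k σ_k = s² for all k ≥ 0, and let sequences (x_k) ⊂ ℝ^{d1}, (y_k) ⊂ ℝ^{d2} satisfy the PDHG optimality inclusions −[(x_{k+1} − x_k)/τ_k − Fᵀ(y_{k+1} − y_k) + Fᵀ y_{k+1}] ∈ ∂f(x_{k+1}) and −[(y_{k+1} − y_k)/σ_k − F(x_{k+1} − x_k) − F x_{k+1}] ∈ ∂h(y_{k+1}) for all k ≥ 0. Let (x*, y*) satisfy −Fᵀ y* ∈ ∂f(x*) and F x* ∈ ∂h(y*). Define the discrete Lyapunov function E(k) = ‖x_k − x*‖²/(2τ_k) + ‖y_k − y*‖²/(2σ_k) − ⟨F(x_k − x*), y_k − y*⟩. Then for every k ≥ 0, E(k+1) − E(k) ≤ −(μ + 1/(2τ_k) − 1/(2τ_{k+1}))‖x_{k+1}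 − x*‖² − (1/(2σ_k) − 1/(2σ_{k+1}))‖y_{k+1} − y*‖². -/
/-!
Write `a = x_{k+1} - x*`, `p = x_{k+1} - x_k`, `b = y_{k+1} - y*`, `q = y_{k+1} - y_k`.
Strong monotonicity of `∂f` and monotonicity of `∂h`, applied to the iteration inclusions and the
saddle-point inclusions, add up (the terms `⟨Fa, b⟩` cancel) to
`⟨p, a⟩/τ_k + ⟨q, b⟩/σ_k - ⟨Fa, q⟩ - ⟨Fp, b⟩ ≤ -μ‖a‖²`.
Expanding `x_k - x* = a - p` and `y_k - y* = b - q` in `E(k)`, the difference `E(k+1) - E(k)` is the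
left-hand side above, plus the terms from the change of step sizes, plus
`⟨Fp, q⟩ - ‖p‖²/(2τ_k) - ‖q‖²/(2σ_k)`, which is nonpositive because `τ_k σ_k ‖F‖² < 1`
(`inner_map_le_of_step`).
-/

open scoped RealInnerProductSpace

/-- `v` is a subgradient of `f` at `x`:
`f z ≥ f x + ⟨v, z − x⟩` for all `z`. -/
def IsSubgradAt {d : ℕ} (f : EuclideanSpace ℝ (Fin d) → ℝ)
    (v x : EuclideanSpace ℝ (Fin d)) : Prop :=
  ∀ z, f x + ⟪v, z - x⟫ ≤ f z

/-- `f` is `μ`-strongly convex: for all `x, y` and every subgradient `v ∈ ∂f(x)`,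
`f y ≥ f x + ⟨v, y − x⟩ + (μ/2)‖y − x‖²`. -/
def StronglyConvexWith {d : ℕ} (μ : ℝ) (f : EuclideanSpace ℝ (Fin d) → ℝ) : Prop :=
  ∀ x y v, IsSubgradAt f v x → f x + ⟪v, y - x⟫ + μ / 2 * ‖y - x‖ ^ 2 ≤ f y

/-- The discrete Lyapunov function with iteration-varying step sizes:
`E(k) = ‖x_k − x*‖²/(2τ_k) + ‖y_k − y*‖²/(2σ_k) − ⟨F(x_k − x*), y_k − y*⟩`. -/
noncomputable def pdhgLyap {d1 d2 : ℕ}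
    (F : EuclideanSpace ℝ (Fin d1) →L[ℝ] EuclideanSpace ℝ (Fin d2))
    (τ σ : ℕ → ℝ) (x : ℕ → EuclideanSpace ℝ (Fin d1)) (y : ℕ → EuclideanSpace ℝ (Fin d2))
    (xs : EuclideanSpace ℝ (Fin d1)) (ys : EuclideanSpace ℝ (Fin d2)) (k : ℕ) : ℝ :=
  ‖x k - xs‖ ^ 2 / (2 * τ k) + ‖y k - ys‖ ^ 2 / (2 * σ k) - ⟪F (x k - xs), y k - ys⟫

/-- Monotonicity of the subdifferential. -/
lemma IsSubgradAt.inner_sub_nonneg {d : ℕ} {f : EuclideanSpace ℝ (Fin d) → ℝ}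
    {v w x z : EuclideanSpace ℝ (Fin d)} (hv : IsSubgradAt f v x) (hw : IsSubgradAt f w z) :
    0 ≤ ⟪v - w, x - z⟫ := by
  have h1 := hv z
  have h2 := hw x
  rw [← neg_sub x z, inner_neg_right] at h1
  rw [inner_sub_left]
  linarith

/-- Strong monotonicity of the subdifferential of a strongly convex function. -/
lemma StronglyConvexWith.le_inner_sub {d : ℕ} {μ : ℝ} {f : EuclideanSpace ℝ (Fin d) → ℝ}
    (hf : StronglyConvexWith μ f) {v w x z : EuclideanSpace ℝ (Fin d)}
    (hv : IsSubgradAt f v x) (hw : IsSubgradAt f w z) :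
    μ * ‖x - z‖ ^ 2 ≤ ⟪v - w, x - z⟫ := by
  have h1 := hf x z v hv
  have h2 := hf z x w hw
  rw [← neg_sub x z, inner_neg_right, norm_neg] at h1
  rw [inner_sub_left]
  linarith

/-- Under the step-size condition the coupling term is dominated by the proximal terms. -/
lemma inner_map_le_of_step {d1 d2 : ℕ}
    (F : EuclideanSpace ℝ (Fin d1) →L[ℝ] EuclideanSpace ℝ (Fin d2)) {t r : ℝ}
    (ht : 0 < t) (hr : 0 < r) (htr : t * r * ‖F‖ ^ 2 ≤ 1)
    (p : EuclideanSpace ℝ (Fin d1)) (q : EuclideanSpace ℝ (Fin d2)) :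
    ⟪F p, q⟫ ≤ t⁻¹ * ‖p‖ ^ 2 / 2 + r⁻¹ * ‖q‖ ^ 2 / 2 := by
  have h1 : ⟪F p, q⟫ ≤ ‖F‖ * ‖p‖ * ‖q‖ :=
    (real_inner_le_norm _ _).trans (by gcongr; exact F.le_opNorm p)
  have h2 : t * ‖F‖ ^ 2 ≤ r⁻¹ := by
    rw [← one_div, le_div_iff₀ hr]
    linarith
  have h3 : t * ‖F‖ ^ 2 * ‖q‖ ^ 2 ≤ r⁻¹ * ‖q‖ ^ 2 := by gcongr
  -- Young's inequality, with the weight `t` on the `q`-side.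
  have h4 : 0 ≤ t⁻¹ * (‖p‖ - t * ‖F‖ * ‖q‖) ^ 2 := by positivity
  have h5 : t⁻¹ * (‖p‖ - t * ‖F‖ * ‖q‖) ^ 2
      = t⁻¹ * ‖p‖ ^ 2 - 2 * (‖F‖ * ‖p‖ * ‖q‖) + t * ‖F‖ ^ 2 * ‖q‖ ^ 2 := by
    field_simp
    ring
  linarith

/-- Lemma 3.1: one-step decrease of the iteration-varying Lyapunov function. -/
theorem pdhg_lyapunov_varying_decrease {d1 d2 : ℕ} (μ s : ℝ) (hμ : 0 < μ) (hs : 0 < s)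
    (f : EuclideanSpace ℝ (Fin d1) → ℝ) (hf : StronglyConvexWith μ f)
    (h : EuclideanSpace ℝ (Fin d2) → ℝ) (hconv : ConvexOn ℝ Set.univ h)
    (F : EuclideanSpace ℝ (Fin d1) →L[ℝ] EuclideanSpace ℝ (Fin d2))
    (hsF : s ^ 2 * ‖F‖ ^ 2 < 1)
    (τ σ : ℕ → ℝ) (hτ : ∀ k, 0 < τ k) (hσ : ∀ k, 0 < σ k)
    (hτσ : ∀ k, τ k * σ k = s ^ 2)
    (x : ℕ → EuclideanSpace ℝ (Fin d1)) (y : ℕ → EuclideanSpace ℝ (Fin d2))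
    (xs : EuclideanSpace ℝ (Fin d1)) (ys : EuclideanSpace ℝ (Fin d2))
    (hdesc : ∀ k, IsSubgradAt f
      (-((τ k)⁻¹ • (x (k + 1) - x k) - (ContinuousLinearMap.adjoint F) (y (k + 1) - y k)
          + (ContinuousLinearMap.adjoint F) (y (k + 1)))) (x (k + 1)))
    (hasc : ∀ k, IsSubgradAt h
      (-((σ k)⁻¹ • (y (k + 1) - y k) - F (x (k + 1) - x k) - F (x (k + 1)))) (y (k + 1)))
    (hsadx : IsSubgradAt f (-(ContinuousLinearMap.adjoint F) ys) xs)
    (hsady : IsSubgradAt h (F xs) ys) :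
    ∀ k, pdhgLyap F τ σ x y xs ys (k + 1) - pdhgLyap F τ σ x y xs ys k
      ≤ -(μ + 1 / (2 * τ k) - 1 / (2 * τ (k + 1))) * ‖x (k + 1) - xs‖ ^ 2
        - (1 / (2 * σ k) - 1 / (2 * σ (k + 1))) * ‖y (k + 1) - ys‖ ^ 2 := by
  intro k
  have hx := hf.le_inner_sub (hdesc k) hsadx
  have hy := (hasc k).inner_sub_nonneg hsady
  have hc := inner_map_le_of_step F (hτ k) (hσ k) (by rw [hτσ k]; exact hsF.le)
    (x (k + 1) - x k) (y (k + 1) - y k)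
  unfold pdhgLyap
  have ex : x k - xs = (x (k + 1) - xs) - (x (k + 1) - x k) := by abel
  have ey : y k - ys = (y (k + 1) - ys) - (y (k + 1) - y k) := by abel
  rw [ex, ey]
  have vx : -((τ k)⁻¹ • (x (k + 1) - x k) - (ContinuousLinearMap.adjoint F) (y (k + 1) - y k)
          + (ContinuousLinearMap.adjoint F) (y (k + 1))) - -(ContinuousLinearMap.adjoint F) ys
      = -((τ k)⁻¹ • (x (k + 1) - x k)) + (ContinuousLinearMap.adjoint F) (y (k + 1) - y k)
          - (ContinuousLinearMap.adjoint F) (y (k + 1) - ys) := by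
    simp only [map_sub]
    abel
  have vy : -((σ k)⁻¹ • (y (k + 1) - y k) - F (x (k + 1) - x k) - F (x (k + 1))) - F xs
      = -((σ k)⁻¹ • (y (k + 1) - y k)) + F (x (k + 1) - x k) + F (x (k + 1) - xs) := by
    simp only [map_sub]
    abel
  rw [vx] at hx
  rw [vy] at hy
  generalize x (k + 1) - xs = a at *
  generalize x (k + 1) - x k = p at *
  generalize y (k + 1) - ys = b at *
  generalize y (k + 1) - y k = q at *
  rw [inner_sub_left, inner_add_left, inner_neg_left, real_inner_smul_left,
    ContinuousLinearMap.adjoint_inner_left, ContinuousLinearMap.adjoint_inner_left,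
    real_inner_comm (F a) q, real_inner_comm (F a) b] at hx
  rw [inner_add_left, inner_add_left, inner_neg_left, real_inner_smul_left] at hy
  rw [norm_sub_sq_real, norm_sub_sq_real, map_sub, inner_sub_left, inner_sub_right,
    inner_sub_right, real_inner_comm p a, real_inner_comm q b]
  simp only [div_eq_mul_inv, mul_inv, one_mul] at *
  linarith
end

section
/- Under the hypotheses of the iteration-varying Lyapunov lemma — f : ℝ^{d1} → ℝ μ-strongly convex, h : ℝ^{d2} → ℝ convex, F ∈ ℝ^{d2×d1}, s²‖F‖² < 1, PDHG inclusions −[(x_{k+1} − x_k)/τ_k − Fᵀ(y_{k+1} − y_k) + Fᵀ y_{k+1}] ∈ ∂f(x_{k+1}) and −[(y_{k+1} − y_k)/σ_k − F(x_{k+1} − x_k) − F x_{k+1}] ∈ ∂h(y_{k+1}), saddle conditions −Fᵀ y* ∈ ∂f(x*), F x* ∈ ∂h(y*) — take a constant c ∈ (0, 2μ) and step sizes τ_k = 1/(c(k+1)), σ_k = c s² (k+1). Set α = min((2μ − c)/(s + c), 1/(1 + c s ‖F‖²)) and E(k) = ‖x_k − x*‖²/(2τ_k) + ‖y_k − y*‖²/(2σ_k)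 − ⟨F(x_k − x*), y_k − y*⟩. Then for every k ≥ 0, E(k+1) ≤ ((k+2)/(k+2+α)) E(k). -/
/-!
Write `u = x (k+1) - xs`, `v = y (k+1) - ys`, `p = x (k+1) - x k`, `q = y (k+1) - y k`.
Adding the strong monotonicity of `∂f` and the monotonicity of `∂h` between the new iterate and
the saddle point, and expanding `E(k)` in `u, v, p, q`, gives
`E(k) ≥ ‖u‖²/(2τ_k) + ‖v‖²/(2σ_k) - ⟨Fu, v⟩ + μ‖u‖² + D`, where
`D = ‖p‖²/(2τ_k) + ‖q‖²/(2σ_k) - ⟨Fp, q⟩` is nonnegative because `τ_k σ_k ‖F‖² = s²‖F‖² < 1`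
(`coupling_nonneg`).

With `n = k + 2`, it remains to dominate `(1 + α/n) E(k+1)`. The two terms of the minimum defining
`α` say exactly that `2μ - c - αc ≥ αs` and `1 - α ≥ αcs‖F‖²`; with these the difference is at
least `(αs/2)(‖u‖ - ‖F‖‖v‖/(sn))²` (`quadratic_gap`).
-/

open scoped RealInnerProductSpace

section

variable {d1 d2 : ℕ}

lemma IsSubgradAt.mono {d : ℕ} {h : EuclideanSpace ℝ (Fin d) → ℝ}
    {v w y z : EuclideanSpace ℝ (Fin d)} (hv : IsSubgradAt h v y) (hw : IsSubgradAt h w z) :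
    0 ≤ ⟪v - w, y - z⟫ := by
  have h1 := hv z
  have h2 := hw y
  rw [← neg_sub y z, inner_neg_right] at h1
  rw [inner_sub_left]
  linarith

lemma StronglyConvexWith.strong_mono {d : ℕ} {μ : ℝ} {f : EuclideanSpace ℝ (Fin d) → ℝ}
    (hf : StronglyConvexWith μ f) {v w y z : EuclideanSpace ℝ (Fin d)}
    (hv : IsSubgradAt f v y) (hw : IsSubgradAt f w z) :
    μ * ‖y - z‖ ^ 2 ≤ ⟪v - w, y - z⟫ := by
  have h1 := hf y z v hv
  have h2 := hf z y w hw
  rw [← neg_sub y z, inner_neg_right, norm_neg] at h1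
  rw [inner_sub_left]
  linarith

lemma abs_inner_apply_le (F : EuclideanSpace ℝ (Fin d1) →L[ℝ] EuclideanSpace ℝ (Fin d2))
    (p : EuclideanSpace ℝ (Fin d1)) (q : EuclideanSpace ℝ (Fin d2)) :
    |⟪F p, q⟫| ≤ ‖F‖ * ‖p‖ * ‖q‖ :=
  (abs_real_inner_le_norm _ _).trans
    (mul_le_mul_of_nonneg_right (F.le_opNorm p) (norm_nonneg q))

/-- The coupled quadratic form with inverse step sizes `c m` and `1 / (c s² m)` is nonnegative:
it is at least `(c m / 2) (‖p‖ - ‖q‖ / (c s m))²`, since `s ‖F‖ ≤ 1`. -/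
lemma coupling_nonneg (F : EuclideanSpace ℝ (Fin d1) →L[ℝ] EuclideanSpace ℝ (Fin d2))
    {s c m : ℝ} (hs : 0 < s) (hc : 0 < c) (hm : 0 < m) (hsF : s ^ 2 * ‖F‖ ^ 2 < 1)
    (p : EuclideanSpace ℝ (Fin d1)) (q : EuclideanSpace ℝ (Fin d2)) :
    0 ≤ c * m / 2 * ‖p‖ ^ 2 + (c * s ^ 2 * m)⁻¹ / 2 * ‖q‖ ^ 2 - ⟪F p, q⟫ := by
  have hF : ‖F‖ ≤ 1 / s := by
    rw [le_div_iff₀ hs]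
    nlinarith [norm_nonneg F, mul_nonneg (norm_nonneg F) hs.le]
  have h1 : ⟪F p, q⟫ ≤ 1 / s * (‖p‖ * ‖q‖) := by
    have := mul_le_mul_of_nonneg_right hF (mul_nonneg (norm_nonneg p) (norm_nonneg q))
    linarith [le_of_abs_le (abs_inner_apply_le F p q)]
  have h2 : c * m / 2 * ‖p‖ ^ 2 + (c * s ^ 2 * m)⁻¹ / 2 * ‖q‖ ^ 2 - 1 / s * (‖p‖ * ‖q‖)
      = c * m / 2 * (‖p‖ - ‖q‖ / (c * s * m)) ^ 2 := by
    field_simp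
    ring
  have h3 : 0 ≤ c * m / 2 * (‖p‖ - ‖q‖ / (c * s * m)) ^ 2 := by positivity
  linarith

/-- The scalar inequality that fixes the rate: `U, V, w, L` stand for `‖u‖, ‖v‖, ⟨Fu, v⟩, ‖F‖`,
and `n` for `k + 2`. -/
lemma quadratic_gap {μ s c α n L U V w : ℝ} (hs : 0 < s) (hc : 0 < c) (hn : 1 < n)
    (hα : 0 < α) (h1 : α * s ≤ 2 * μ - c - α * c) (h2 : α * (c * s * L ^ 2) ≤ 1 - α)
    (hw : |w| ≤ L * U * V) :
    (1 + α / n) * (c * n / 2 * U ^ 2 + (c * s ^ 2 * n)⁻¹ / 2 * V ^ 2 - w)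
      ≤ c * (n - 1) / 2 * U ^ 2 + (c * s ^ 2 * (n - 1))⁻¹ / 2 * V ^ 2 - w + μ * U ^ 2 := by
  have hn0 : 0 < n := by linarith
  have hn1 : 0 < n - 1 := by linarith
  have hU : α * s * U ^ 2 ≤ (2 * μ - c - α * c) * U ^ 2 :=
    mul_le_mul_of_nonneg_right h1 (sq_nonneg U)
  have hinv : (c * s ^ 2 * n)⁻¹ * (1 + 1 / n) ≤ (c * s ^ 2 * (n - 1))⁻¹ := by
    rw [← sub_nonneg]
    have : (c * s ^ 2 * (n - 1))⁻¹ - (c * s ^ 2 * n)⁻¹ * (1 + 1 / n)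
        = 1 / (c * s ^ 2 * (n - 1) * n ^ 2) := by
      field_simp
      ring
    rw [this]
    positivity
  have hV : (α * L ^ 2 / (s * n ^ 2)) * V ^ 2
      ≤ ((c * s ^ 2 * (n - 1))⁻¹ - (c * s ^ 2 * n)⁻¹ * (1 + α / n)) * V ^ 2 := by
    refine mul_le_mul_of_nonneg_right ?_ (sq_nonneg V)
    have h3 : α * (c * s * L ^ 2) * (c * s ^ 2 * n ^ 2)⁻¹ ≤ (1 - α) * (c * s ^ 2 * n ^ 2)⁻¹ :=
      mul_le_mul_of_nonneg_right h2 (by positivity)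
    have h4 : α * (c * s * L ^ 2) * (c * s ^ 2 * n ^ 2)⁻¹ = α * L ^ 2 / (s * n ^ 2) := by
      field_simp
    have h5 : (1 - α) * (c * s ^ 2 * n ^ 2)⁻¹
        = (c * s ^ 2 * n)⁻¹ * (1 + 1 / n) - (c * s ^ 2 * n)⁻¹ * (1 + α / n) := by
      field_simp
      ring
    linarith
  have hW : -(2 * (α / n) * (L * U * V)) ≤ 2 * (α / n) * w := by
    have := mul_le_mul_of_nonneg_left (neg_le_of_abs_le hw) (show 0 ≤ 2 * (α / n) by positivity)
    linarith
  have hsq : 0 ≤ α * s * (U - L * V / (s * n)) ^ 2 := by positivity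
  have hsq' : α * s * (U - L * V / (s * n)) ^ 2
      = α * s * U ^ 2 + (α * L ^ 2 / (s * n ^ 2)) * V ^ 2 - 2 * (α / n) * (L * U * V) := by
    field_simp
    ring
  have hfin : (c * (n - 1) / 2 * U ^ 2 + (c * s ^ 2 * (n - 1))⁻¹ / 2 * V ^ 2 - w + μ * U ^ 2)
      - (1 + α / n) * (c * n / 2 * U ^ 2 + (c * s ^ 2 * n)⁻¹ / 2 * V ^ 2 - w)
      = ((2 * μ - c - α * c) * U ^ 2
        + ((c * s ^ 2 * (n - 1))⁻¹ - (c * s ^ 2 * n)⁻¹ * (1 + α / n)) * V ^ 2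
        + 2 * (α / n) * w) / 2 := by
    have : α / n * n = α := div_mul_cancel₀ _ hn0.ne'
    linear_combination (-c / 2 * U ^ 2) * this
  linarith

/-- Descent of the Lyapunov quantity over one step from `(x, y)` to `(x', y')`, with inverse step
sizes `a`, `b` for which the coupled quadratic form is nonnegative at the increment. -/
lemma pdhg_step {μ a b : ℝ} {f : EuclideanSpace ℝ (Fin d1) → ℝ} (hf : StronglyConvexWith μ f)
    {h : EuclideanSpace ℝ (Fin d2) → ℝ}
    (F : EuclideanSpace ℝ (Fin d1) →L[ℝ] EuclideanSpace ℝ (Fin d2))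
    {x x' xs : EuclideanSpace ℝ (Fin d1)} {y y' ys : EuclideanSpace ℝ (Fin d2)}
    (hdesc : IsSubgradAt f
      (-(a • (x' - x) - (ContinuousLinearMap.adjoint F) (y' - y)
          + (ContinuousLinearMap.adjoint F) y')) x')
    (hasc : IsSubgradAt h (-(b • (y' - y) - F (x' - x) - F x')) y')
    (hsadx : IsSubgradAt f (-(ContinuousLinearMap.adjoint F) ys) xs)
    (hsady : IsSubgradAt h (F xs) ys)
    (hD : 0 ≤ a / 2 * ‖x' - x‖ ^ 2 + b / 2 * ‖y' - y‖ ^ 2 - ⟪F (x' - x), y' - y⟫) :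
    a / 2 * ‖x' - xs‖ ^ 2 + b / 2 * ‖y' - ys‖ ^ 2 - ⟪F (x' - xs), y' - ys⟫ + μ * ‖x' - xs‖ ^ 2
      ≤ a / 2 * ‖x - xs‖ ^ 2 + b / 2 * ‖y - ys‖ ^ 2 - ⟪F (x - xs), y - ys⟫ := by
  have m1 := hf.strong_mono hdesc hsadx
  have m2 := hasc.mono hsady
  obtain ⟨u, hu⟩ : ∃ u, u = x' - xs := ⟨_, rfl⟩
  obtain ⟨v, hv⟩ : ∃ v, v = y' - ys := ⟨_, rfl⟩
  obtain ⟨p, hp⟩ : ∃ p, p = x' - x := ⟨_, rfl⟩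
  obtain ⟨q, hq⟩ : ∃ q, q = y' - y := ⟨_, rfl⟩
  have hx : x - xs = u - p := by rw [hu, hp]; abel
  have hy : y - ys = v - q := by rw [hv, hq]; abel
  have e1 : -(a • p - (ContinuousLinearMap.adjoint F) q + (ContinuousLinearMap.adjoint F) y')
      - -(ContinuousLinearMap.adjoint F) ys
      = -(a • p) + (ContinuousLinearMap.adjoint F) q - (ContinuousLinearMap.adjoint F) v := by
    rw [hv, map_sub]; abel
  have e2 : -(b • q - F p - F x') - F xs = -(b • q) + F p + F u := by
    rw [hu, map_sub]; abel
  rw [← hp, ← hq, ← hu, e1] at m1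
  rw [← hp, ← hq, ← hv, e2] at m2
  rw [← hp, ← hq] at hD
  rw [← hu, ← hv, hx, hy]
  simp only [inner_sub_left, inner_add_left, inner_neg_left, real_inner_smul_left,
    ContinuousLinearMap.adjoint_inner_left] at m1 m2
  rw [norm_sub_sq_real, norm_sub_sq_real, map_sub]
  simp only [inner_sub_left, inner_sub_right]
  rw [real_inner_comm u p, real_inner_comm (F u) q, real_inner_comm (F u) v] at m1
  rw [real_inner_comm v q] at m2
  linarith

end

/-- one-step contraction `E(k+1) ≤ ((k+2)/(k+2+α)) E(k)` for the step
sizes `τ_k = 1/(c(k+1))`, `σ_k = c s² (k+1)` with `c ∈ (0, 2μ)`. -/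
theorem pdhg_lyapunov_varying_contraction {d1 d2 : ℕ} (μ s c : ℝ) (hμ : 0 < μ) (hs : 0 < s)
    (hc : 0 < c) (hc2 : c < 2 * μ)
    (f : EuclideanSpace ℝ (Fin d1) → ℝ) (hf : StronglyConvexWith μ f)
    (h : EuclideanSpace ℝ (Fin d2) → ℝ) (hconv : ConvexOn ℝ Set.univ h)
    (F : EuclideanSpace ℝ (Fin d1) →L[ℝ] EuclideanSpace ℝ (Fin d2))
    (hsF : s ^ 2 * ‖F‖ ^ 2 < 1)
    (τ σ : ℕ → ℝ)
    (hτ : ∀ k, τ k = 1 / (c * ((k : ℝ) + 1))) (hσ : ∀ k, σ k = c * s ^ 2 * ((k : ℝ) + 1))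
    (x : ℕ → EuclideanSpace ℝ (Fin d1)) (y : ℕ → EuclideanSpace ℝ (Fin d2))
    (xs : EuclideanSpace ℝ (Fin d1)) (ys : EuclideanSpace ℝ (Fin d2))
    (hdesc : ∀ k, IsSubgradAt f
      (-((τ k)⁻¹ • (x (k + 1) - x k) - (ContinuousLinearMap.adjoint F) (y (k + 1) - y k)
          + (ContinuousLinearMap.adjoint F) (y (k + 1)))) (x (k + 1)))
    (hasc : ∀ k, IsSubgradAt h
      (-((σ k)⁻¹ • (y (k + 1) - y k) - F (x (k + 1) - x k) - F (x (k + 1)))) (y (k + 1)))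
    (hsadx : IsSubgradAt f (-(ContinuousLinearMap.adjoint F) ys) xs)
    (hsady : IsSubgradAt h (F xs) ys)
    (α : ℝ) (hα : α = min ((2 * μ - c) / (s + c)) (1 / (1 + c * s * ‖F‖ ^ 2))) :
    ∀ k, pdhgLyap F τ σ x y xs ys (k + 1)
      ≤ (((k : ℝ) + 2) / ((k : ℝ) + 2 + α)) * pdhgLyap F τ σ x y xs ys k := by
  intro k
  have hk : (0 : ℝ) ≤ k := k.cast_nonneg
  have hden : 0 < 1 + c * s * ‖F‖ ^ 2 := by positivity
  have hα0 : 0 < α := by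
    rw [hα]
    exact lt_min (div_pos (by linarith) (by linarith)) (by positivity)
  have h1 : α * s ≤ 2 * μ - c - α * c := by
    have := hα.le.trans (min_le_left _ _)
    rw [le_div_iff₀ (by linarith)] at this
    linarith
  have h2 : α * (c * s * ‖F‖ ^ 2) ≤ 1 - α := by
    have := hα.le.trans (min_le_right _ _)
    rw [le_div_iff₀ hden] at this
    linarith
  have hτi : ∀ j, (τ j)⁻¹ = c * ((j : ℝ) + 1) := fun j => by rw [hτ j, one_div, inv_inv]
  have hσi : ∀ j, (σ j)⁻¹ = (c * s ^ 2 * ((j : ℝ) + 1))⁻¹ := fun j => by rw [hσ j]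
  have hE : ∀ j, pdhgLyap F τ σ x y xs ys j
      = c * ((j : ℝ) + 1) / 2 * ‖x j - xs‖ ^ 2
        + (c * s ^ 2 * ((j : ℝ) + 1))⁻¹ / 2 * ‖y j - ys‖ ^ 2 - ⟪F (x j - xs), y j - ys⟫ := by
    intro j
    rw [← hτi, ← hσi, pdhgLyap, div_eq_mul_inv, div_eq_mul_inv, mul_inv, mul_inv]
    ring
  have hd := hdesc k
  have ha := hasc k
  rw [hτi] at hd
  rw [hσi] at ha
  have step := pdhg_step hf F hd ha hsadx hsady
    (coupling_nonneg F hs hc (by linarith) hsF _ _)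
  have gap := quadratic_gap (n := (k : ℝ) + 2) hs hc (by linarith) hα0 h1 h2
    (abs_inner_apply_le F (x (k + 1) - xs) (y (k + 1) - ys))
  rw [show (k : ℝ) + 2 - 1 = k + 1 by ring] at gap
  rw [← hE k] at step
  have hE' := hE (k + 1)
  push_cast at hE'
  rw [show (k : ℝ) + 1 + 1 = k + 2 by ring] at hE'
  rw [← hE'] at gap
  have hfac : ((k : ℝ) + 2) / (k + 2 + α) * (1 + α / (k + 2)) = 1 := by
    field_simp
  calc pdhgLyap F τ σ x y xs ys (k + 1)
      = ((k : ℝ) + 2) / (k + 2 + α)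
          * ((1 + α / (k + 2)) * pdhgLyap F τ σ x y xs ys (k + 1)) := by
        rw [← mul_assoc, hfac, one_mul]
    _ ≤ _ := mul_le_mul_of_nonneg_left (gap.trans step) (by positivity)
end

section
/- Let f : ℝ^{d1} → ℝ be μ-strongly convex, h : ℝ^{d2} → ℝ convex, F ∈ ℝ^{d2×d1}, s > 0 with s‖F‖ < 1, c ∈ (0, 2μ), step sizes τ_k = 1/(c(k+1)), σ_k = c s² (k+1), and suppose (x_k), (y_k) satisfy the PDHG optimality inclusions −[(x_{k+1} − x_k)/τ_k − Fᵀ(y_{k+1} − y_k) + Fᵀ y_{k+1}] ∈ ∂f(x_{k+1}) and −[(y_{k+1} − y_k)/σ_k − F(x_{k+1} − x_k) − F x_{k+1}] ∈ ∂h(y_{k+1}), while (x*, y*) satisfies −Fᵀ y* ∈ ∂f(x*) and F x* ∈ ∂h(y*). With α = min((2μ − c)/(s + c), 1/(1 + c s ‖F‖²)), for every k ≥ 0: ‖x_k − x*‖² ≤ ((1 + s‖F‖)/((1 − s‖F‖)(k+1))) · (∏_{j=1}^{k} (j+1)/(j+1+α)) · (‖x_0 − x*‖² + (1/(c² s²))‖y_0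 − y*‖²). -/
/-!
The proof is a Lyapunov argument. For the errors `u = x_k - x*`, `v = y_k - y*` and `t = k + 1`
consider the energy `E_t(u, v) = c t ‖u‖² + ‖v‖² / (c s² t) - 2 ⟪F u, v⟫`, whose quadratic part is
`‖u‖² / τ_k + ‖v‖² / σ_k`. By Cauchy–Schwarz and Young it lies between `1 - s‖F‖` and `1 + s‖F‖`
times that quadratic part (`abs_cross_le`), so it is nonnegative.

Strong monotonicity of `∂f` and monotonicity of `∂h`, applied between the new iterate and the saddle
point, give `E_t(new) + E_t(new - old) + 2μ ‖u_new‖² ≤ E_t(old)` (`energy_step`). Passing from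
`E_t(new)` to `E_{t+1}(new)` costs `c ‖u‖²` and gains `‖v‖² / (c s² t (t+1))`; since `c < 2μ`, what
is left dominates `α / (t+1) * E_{t+1}(new)`, and this is where the value of `α` comes from
(`energy_gain`). Hence the energy contracts by `(t+1) / (t+1+α)` in each step, and the two-sided
bound on the energy turns this into the claimed rate.
-/

open scoped RealInnerProductSpace

section Energy

variable {U V : Type*} [NormedAddCommGroup U] [InnerProductSpace ℝ U]
  [NormedAddCommGroup V] [InnerProductSpace ℝ V]

/-- The energy `c t ‖u‖² + ‖v‖² / (c s² t) - 2 ⟪F u, v⟫` of a primal-dual error `(u, v)`. -/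
noncomputable def pdhgEnergy (F : U →L[ℝ] V) (c s t : ℝ) (u : U) (v : V) : ℝ :=
  c * t * ‖u‖ ^ 2 + ‖v‖ ^ 2 / (c * s ^ 2 * t) - 2 * ⟪F u, v⟫

lemma abs_inner_map_le (F : U →L[ℝ] V) (u : U) (v : V) : |⟪F u, v⟫| ≤ ‖F‖ * ‖u‖ * ‖v‖ :=
  (abs_real_inner_le_norm _ _).trans
    (mul_le_mul_of_nonneg_right (F.le_opNorm u) (norm_nonneg v))

lemma abs_cross_le (F : U →L[ℝ] V) {c s t : ℝ} (hc : 0 < c) (hs : 0 < s) (ht : 0 < t)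
    (u : U) (v : V) :
    |2 * ⟪F u, v⟫| ≤ s * ‖F‖ * (c * t * ‖u‖ ^ 2 + ‖v‖ ^ 2 / (c * s ^ 2 * t)) := by
  have young : 2 * ‖u‖ * ‖v‖ ≤ s * (c * t * ‖u‖ ^ 2 + ‖v‖ ^ 2 / (c * s ^ 2 * t)) := by
    have hsq : s * (c * t * ‖u‖ ^ 2 + ‖v‖ ^ 2 / (c * s ^ 2 * t)) - 2 * ‖u‖ * ‖v‖
        = s * c * t * (‖u‖ - ‖v‖ / (c * s * t)) ^ 2 := by
      field_simp
      ring
    have : 0 ≤ s * c * t * (‖u‖ - ‖v‖ / (c * s * t)) ^ 2 := by positivity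
    linarith
  rw [abs_mul, abs_two]
  nlinarith [abs_inner_map_le F u v, mul_le_mul_of_nonneg_left young (norm_nonneg F)]

lemma le_pdhgEnergy (F : U →L[ℝ] V) {c s t : ℝ} (hc : 0 < c) (hs : 0 < s) (ht : 0 < t)
    (u : U) (v : V) :
    (1 - s * ‖F‖) * (c * t * ‖u‖ ^ 2 + ‖v‖ ^ 2 / (c * s ^ 2 * t)) ≤ pdhgEnergy F c s t u v := by
  have := (abs_le.1 (abs_cross_le F hc hs ht u v)).2
  unfold pdhgEnergy
  linarith

lemma pdhgEnergy_le (F : U →L[ℝ] V) {c s t : ℝ} (hc : 0 < c) (hs : 0 < s) (ht : 0 < t)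
    (u : U) (v : V) :
    pdhgEnergy F c s t u v ≤ (1 + s * ‖F‖) * (c * t * ‖u‖ ^ 2 + ‖v‖ ^ 2 / (c * s ^ 2 * t)) := by
  have := (abs_le.1 (abs_cross_le F hc hs ht u v)).1
  unfold pdhgEnergy
  linarith

/-- Descent of the energy with frozen step sizes, from the sum of the two monotonicity
inequalities at the saddle point. -/
lemma energy_step (F : U →L[ℝ] V) {c s t μ : ℝ} (u₀ u : U) (v₀ v : V)
    (H : μ * ‖u‖ ^ 2 ≤ -(c * t * ⟪u - u₀, u⟫) - (c * s ^ 2 * t)⁻¹ * ⟪v - v₀, v⟫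
      + ⟪F u, v - v₀⟫ + ⟪F (u - u₀), v⟫) :
    pdhgEnergy F c s t u v + pdhgEnergy F c s t (u - u₀) (v - v₀) + 2 * μ * ‖u‖ ^ 2
      ≤ pdhgEnergy F c s t u₀ v₀ := by
  have h1 : ‖u - u₀‖ ^ 2 = ‖u‖ ^ 2 - 2 * ⟪u, u₀⟫ + ‖u₀‖ ^ 2 := norm_sub_sq_real u u₀
  have h2 : ‖v - v₀‖ ^ 2 = ‖v‖ ^ 2 - 2 * ⟪v, v₀⟫ + ‖v₀‖ ^ 2 := norm_sub_sq_real v v₀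
  simp only [map_sub, inner_sub_left, inner_sub_right, real_inner_self_eq_norm_sq] at H
  rw [real_inner_comm u u₀, real_inner_comm v v₀] at H
  unfold pdhgEnergy
  rw [h1, h2]
  simp only [map_sub, inner_sub_left, inner_sub_right, div_eq_mul_inv]
  linarith

/-- The surplus left by the change of step sizes from `t` to `t + 1` pays for a fraction
`α / (t + 1)` of the new energy. -/
lemma energy_gain (F : U →L[ℝ] V) {c s t μ α : ℝ} (hc : 0 < c) (hs : 0 < s) (ht : 0 < t)
    (hα0 : 0 ≤ α) (hα1 : α * (s + c) ≤ 2 * μ - c) (hα2 : α * (1 + c * s * ‖F‖ ^ 2) ≤ 1)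
    (u : U) (v : V) :
    (1 + α / (t + 1)) * pdhgEnergy F c s (t + 1) u v
      ≤ pdhgEnergy F c s t u v + 2 * μ * ‖u‖ ^ 2 := by
  have ht1 : 0 < t + 1 := by linarith
  -- Young's inequality with weight `s` on the primal part
  have young : -(2 * ⟪F u, v⟫) / (t + 1)
      ≤ s * ‖u‖ ^ 2 + ‖F‖ ^ 2 * ‖v‖ ^ 2 / (s * (t + 1) ^ 2) := by
    have hsq : s * ‖u‖ ^ 2 + ‖F‖ ^ 2 * ‖v‖ ^ 2 / (s * (t + 1) ^ 2)
        - 2 * (‖F‖ * ‖u‖ * ‖v‖) / (t + 1) = s * (‖u‖ - ‖F‖ * ‖v‖ / (s * (t + 1))) ^ 2 := by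
      field_simp
      ring
    have h0 : 0 ≤ s * (‖u‖ - ‖F‖ * ‖v‖ / (s * (t + 1))) ^ 2 := by positivity
    have h1 : -(2 * ⟪F u, v⟫) / (t + 1) ≤ 2 * (‖F‖ * ‖u‖ * ‖v‖) / (t + 1) := by
      gcongr
      linarith [(abs_le.1 (abs_inner_map_le F u v)).1]
    linarith
  have hyoung := mul_le_mul_of_nonneg_left young hα0
  have hu := mul_le_mul_of_nonneg_right hα1 (sq_nonneg ‖u‖)
  have hv : α * (1 + c * s * ‖F‖ ^ 2) * (‖v‖ ^ 2 / (c * s ^ 2 * (t + 1) ^ 2))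
      ≤ 1 * (‖v‖ ^ 2 / (c * s ^ 2 * (t * (t + 1)))) := by
    gcongr
    nlinarith
  -- the exact change of energy, sorted into the terms estimated above
  have hsplit : (1 + α / (t + 1)) * pdhgEnergy F c s (t + 1) u v
      = pdhgEnergy F c s t u v + c * ‖u‖ ^ 2 - ‖v‖ ^ 2 / (c * s ^ 2 * (t * (t + 1)))
        + α * (c * ‖u‖ ^ 2) + α * (‖v‖ ^ 2 / (c * s ^ 2 * (t + 1) ^ 2))
        + α * (-(2 * ⟪F u, v⟫) / (t + 1)) := by
    unfold pdhgEnergy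
    field_simp
    ring
  have hv' : α * (1 + c * s * ‖F‖ ^ 2) * (‖v‖ ^ 2 / (c * s ^ 2 * (t + 1) ^ 2))
      = α * (‖v‖ ^ 2 / (c * s ^ 2 * (t + 1) ^ 2))
        + α * (‖F‖ ^ 2 * ‖v‖ ^ 2 / (s * (t + 1) ^ 2)) := by
    field_simp
  rw [hsplit]
  linarith

end Energy

lemma IsSubgradAt.monotone {d : ℕ} {h : EuclideanSpace ℝ (Fin d) → ℝ}
    {p q x z : EuclideanSpace ℝ (Fin d)} (hp : IsSubgradAt h p x) (hq : IsSubgradAt h q z) :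
    0 ≤ ⟪p - q, x - z⟫ := by
  have h1 := hp z
  have h2 := hq x
  rw [← neg_sub x z, inner_neg_right] at h1
  rw [inner_sub_left]
  linarith

lemma StronglyConvexWith.monotone {d : ℕ} {μ : ℝ} {f : EuclideanSpace ℝ (Fin d) → ℝ}
    (hf : StronglyConvexWith μ f) {p q x z : EuclideanSpace ℝ (Fin d)}
    (hp : IsSubgradAt f p x) (hq : IsSubgradAt f q z) :
    μ * ‖x - z‖ ^ 2 ≤ ⟪p - q, x - z⟫ := by
  have h1 := hf x z p hp
  have h2 := hf z x q hq
  rw [← neg_sub x z, inner_neg_right, norm_neg] at h1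
  rw [inner_sub_left]
  linarith

/-- Theorem 3.2: near-`O(1/k²)` convergence of the iterates of PDHG with
step sizes `τ_k = 1/(c(k+1))`, `σ_k = c s² (k+1)` and `c ∈ (0, 2μ)`. -/
theorem pdhg_varying_iterate_rate {d1 d2 : ℕ} (μ s c : ℝ) (hμ : 0 < μ) (hs : 0 < s)
    (hc : 0 < c) (hc2 : c < 2 * μ)
    (f : EuclideanSpace ℝ (Fin d1) → ℝ) (hf : StronglyConvexWith μ f)
    (h : EuclideanSpace ℝ (Fin d2) → ℝ) (hconv : ConvexOn ℝ Set.univ h)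
    (F : EuclideanSpace ℝ (Fin d1) →L[ℝ] EuclideanSpace ℝ (Fin d2))
    (hsF : s * ‖F‖ < 1)
    (τ σ : ℕ → ℝ)
    (hτ : ∀ k, τ k = 1 / (c * ((k : ℝ) + 1))) (hσ : ∀ k, σ k = c * s ^ 2 * ((k : ℝ) + 1))
    (x : ℕ → EuclideanSpace ℝ (Fin d1)) (y : ℕ → EuclideanSpace ℝ (Fin d2))
    (xs : EuclideanSpace ℝ (Fin d1)) (ys : EuclideanSpace ℝ (Fin d2))
    (hdesc : ∀ k, IsSubgradAt f
      (-((τ k)⁻¹ • (x (k + 1) - x k) - (ContinuousLinearMap.adjoint F) (y (k + 1) - y k)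
          + (ContinuousLinearMap.adjoint F) (y (k + 1)))) (x (k + 1)))
    (hasc : ∀ k, IsSubgradAt h
      (-((σ k)⁻¹ • (y (k + 1) - y k) - F (x (k + 1) - x k) - F (x (k + 1)))) (y (k + 1)))
    (hsadx : IsSubgradAt f (-(ContinuousLinearMap.adjoint F) ys) xs)
    (hsady : IsSubgradAt h (F xs) ys)
    (α : ℝ) (hα : α = min ((2 * μ - c) / (s + c)) (1 / (1 + c * s * ‖F‖ ^ 2))) :
    ∀ k, ‖x k - xs‖ ^ 2
      ≤ (1 + s * ‖F‖) / ((1 - s * ‖F‖) * ((k : ℝ) + 1))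
        * (∏ j ∈ Finset.Icc 1 k, ((j : ℝ) + 1) / ((j : ℝ) + 1 + α))
        * (‖x 0 - xs‖ ^ 2 + 1 / (c ^ 2 * s ^ 2) * ‖y 0 - ys‖ ^ 2) := by
  have hα1 : α * (s + c) ≤ 2 * μ - c := by
    rw [← le_div_iff₀ (by positivity), hα]
    exact min_le_left _ _
  have hα2 : α * (1 + c * s * ‖F‖ ^ 2) ≤ 1 := by
    rw [← le_div_iff₀ (by positivity), hα]
    exact min_le_right _ _
  have hα0 : 0 ≤ α := by
    rw [hα]
    exact le_min (div_nonneg (by linarith) (by positivity)) (by positivity)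
  have hgap : 0 < 1 - s * ‖F‖ := by linarith
  have hstep : ∀ k : ℕ, (1 + α / ((k : ℝ) + 1 + 1))
        * pdhgEnergy F c s ((k : ℝ) + 1 + 1) (x (k + 1) - xs) (y (k + 1) - ys)
      ≤ pdhgEnergy F c s ((k : ℝ) + 1) (x k - xs) (y k - ys) := by
    intro k
    have ht : (0 : ℝ) < (k : ℝ) + 1 := by positivity
    have hmf := hf.monotone (hdesc k) hsadx
    have hmh := (hasc k).monotone hsady
    have hτk : (τ k)⁻¹ = c * ((k : ℝ) + 1) := by rw [hτ k, one_div, inv_inv]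
    rw [hτk] at hmf
    rw [hσ k] at hmh
    have ex : x (k + 1) - x k = (x (k + 1) - xs) - (x k - xs) := by abel
    have ey : y (k + 1) - y k = (y (k + 1) - ys) - (y k - ys) := by abel
    have efp : -((c * ((k : ℝ) + 1)) • (x (k + 1) - x k)
          - (ContinuousLinearMap.adjoint F) (y (k + 1) - y k)
          + (ContinuousLinearMap.adjoint F) (y (k + 1))) - -(ContinuousLinearMap.adjoint F) ys
        = -((c * ((k : ℝ) + 1)) • (x (k + 1) - x k))
          + (ContinuousLinearMap.adjoint F) (y (k + 1) - y k)
          - (ContinuousLinearMap.adjoint F) (y (k + 1) - ys) := by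
      simp only [map_sub]
      abel
    have ehp : -((c * s ^ 2 * ((k : ℝ) + 1))⁻¹ • (y (k + 1) - y k) - F (x (k + 1) - x k)
          - F (x (k + 1))) - F xs
        = -((c * s ^ 2 * ((k : ℝ) + 1))⁻¹ • (y (k + 1) - y k)) + F (x (k + 1) - x k)
          + F (x (k + 1) - xs) := by
      simp only [map_sub]
      abel
    rw [efp, ex, ey, inner_sub_left, inner_add_left, inner_neg_left, real_inner_smul_left,
      ContinuousLinearMap.adjoint_inner_left, ContinuousLinearMap.adjoint_inner_left] at hmf
    rw [ehp, ex, ey, inner_add_left, inner_add_left, inner_neg_left, real_inner_smul_left] at hmh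
    have hE := energy_step F (c := c) (s := s) (t := (k : ℝ) + 1) (μ := μ)
      (x k - xs) (x (k + 1) - xs) (y k - ys) (y (k + 1) - ys) (by
        rw [real_inner_comm (F (x (k + 1) - xs)) (y (k + 1) - ys - (y k - ys)),
          real_inner_comm (F (x (k + 1) - xs)) (y (k + 1) - ys)] at hmf
        linarith)
    have hG := energy_gain F hc hs ht hα0 hα1 hα2 (x (k + 1) - xs) (y (k + 1) - ys)
    have hpos : 0 ≤ pdhgEnergy F c s ((k : ℝ) + 1) ((x (k + 1) - xs) - (x k - xs))
        ((y (k + 1) - ys) - (y k - ys)) :=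
      (mul_nonneg hgap.le (by positivity)).trans (le_pdhgEnergy F hc hs ht _ _)
    linarith
  have hrate : ∀ k : ℕ, pdhgEnergy F c s ((k : ℝ) + 1) (x k - xs) (y k - ys)
      ≤ (∏ j ∈ Finset.Icc 1 k, ((j : ℝ) + 1) / ((j : ℝ) + 1 + α))
        * pdhgEnergy F c s 1 (x 0 - xs) (y 0 - ys) := by
    intro k
    induction k with
    | zero => simp
    | succ k ih =>
      rw [Finset.prod_Icc_succ_top (by omega)]
      push_cast
      have hfac : ((k : ℝ) + 1 + 1) / ((k : ℝ) + 1 + 1 + α) * (1 + α / ((k : ℝ) + 1 + 1)) = 1 := by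
        field_simp
      have hr : 0 ≤ ((k : ℝ) + 1 + 1) / ((k : ℝ) + 1 + 1 + α) := by positivity
      have := mul_le_mul_of_nonneg_left ((hstep k).trans ih) hr
      rw [← mul_assoc, hfac, one_mul] at this
      linarith
  intro k
  have ht : (0 : ℝ) < (k : ℝ) + 1 := by positivity
  have hP : 0 ≤ ∏ j ∈ Finset.Icc 1 k, ((j : ℝ) + 1) / ((j : ℝ) + 1 + α) :=
    Finset.prod_nonneg fun j _ => by positivity
  have hlow : (1 - s * ‖F‖) * (c * ((k : ℝ) + 1) * ‖x k - xs‖ ^ 2)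
      ≤ pdhgEnergy F c s ((k : ℝ) + 1) (x k - xs) (y k - ys) := by
    refine le_trans (mul_le_mul_of_nonneg_left ?_ hgap.le) (le_pdhgEnergy F hc hs ht _ _)
    exact le_add_of_nonneg_right (by positivity)
  have hup := mul_le_mul_of_nonneg_left
    (pdhgEnergy_le F hc hs one_pos (x 0 - xs) (y 0 - ys)) hP
  have hall := (hlow.trans (hrate k)).trans hup
  have hD : 0 < (1 - s * ‖F‖) * (c * ((k : ℝ) + 1)) := by positivity
  refine le_of_mul_le_mul_left (le_trans (le_of_eq (by ring)) (hall.trans (le_of_eq ?_))) hD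
  have hne := hgap.ne'
  field_simp
end

section
/- Let f : ℝ^{d1} → ℝ be μ-strongly convex and h : ℝ^{d2} → ℝ be γ-strongly convex (μ, γ > 0), F ∈ ℝ^{d2×d1}, and let fixed step sizes τ, σ > 0 satisfy τσ = s² with s²‖F‖² < 1. Suppose sequences (x_k), (y_k) satisfy −[(x_{k+1} − x_k)/τ − Fᵀ(y_{k+1} − y_k) + Fᵀ y_{k+1}] ∈ ∂f(x_{k+1}) and −[(y_{k+1} − y_k)/σ − F(x_{k+1} − x_k) − F x_{k+1}] ∈ ∂h(y_{k+1}) for all k ≥ 0, and that −Fᵀ y* ∈ ∂f(x*) and F x* ∈ ∂h(y*). Define E(k) = ‖x_k − x*‖²/(2τ) + ‖y_k − y*‖²/(2σ) − ⟨F(x_k − x*), y_k − y*⟩. Then for every k ≥ 0, E(k+1) − E(k) ≤ −(μ‖x_{k+1} − x*‖² + γ‖y_{k+1} − y*‖²). -/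
/-! Write `p = x_{k+1} - x_k`, `q = y_{k+1} - y_k`, `a = x_{k+1} - x*`, `b = y_{k+1} - y*`.
Strong convexity makes the subdifferentials strongly monotone (`StronglyConvexWith.strongly_mono`);
adding the two monotonicity inequalities, between the new iterate and the saddle point, cancels the
terms `⟪F a, b⟫` and leaves
`⟪p, a⟫/τ + ⟪q, b⟫/σ - ⟪F a, q⟫ - ⟪F p, b⟫ ≤ -(μ‖a‖² + γ‖b‖²)`.
The left side exceeds `E(k+1) - E(k)` by exactly `‖p‖²/(2τ) + ‖q‖²/(2σ) - ⟪F p, q⟫`, which is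
nonnegative because `τσ‖F‖² < 1` (`inner_le_step_energy`). -/

open scoped RealInnerProductSpace

/-- The discrete Lyapunov function for fixed-step PDHG:
`E(k) = ‖x_k − x*‖²/(2τ) + ‖y_k − y*‖²/(2σ) − ⟨F(x_k − x*), y_k − y*⟩`. -/
noncomputable def pdhgLyapFixed {d1 d2 : ℕ}
    (F : EuclideanSpace ℝ (Fin d1) →L[ℝ] EuclideanSpace ℝ (Fin d2))
    (τ σ : ℝ) (x : ℕ → EuclideanSpace ℝ (Fin d1)) (y : ℕ → EuclideanSpace ℝ (Fin d2))
    (xs : EuclideanSpace ℝ (Fin d1)) (ys : EuclideanSpace ℝ (Fin d2)) (k : ℕ) : ℝ :=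
  ‖x k - xs‖ ^ 2 / (2 * τ) + ‖y k - ys‖ ^ 2 / (2 * σ) - ⟪F (x k - xs), y k - ys⟫

theorem StronglyConvexWith.strongly_mono {d : ℕ} {μ : ℝ} {f : EuclideanSpace ℝ (Fin d) → ℝ}
    (hf : StronglyConvexWith μ f) {u v x z : EuclideanSpace ℝ (Fin d)}
    (hu : IsSubgradAt f u x) (hv : IsSubgradAt f v z) :
    μ * ‖x - z‖ ^ 2 ≤ ⟪u - v, x - z⟫ := by
  have h1 := hf x z u hu
  have h2 := hf z x v hv
  rw [← neg_sub x z, inner_neg_right, norm_neg] at h1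
  rw [inner_sub_left]
  linarith

/-- The step-size condition makes the quadratic form `‖p‖²/(2τ) + ‖q‖²/(2σ) - ⟪F p, q⟫`
nonnegative. -/
theorem inner_le_step_energy {d1 d2 : ℕ} {s τ σ : ℝ}
    (hs : 0 < s) (hτ : 0 < τ) (hσ : 0 < σ) (hτσ : τ * σ = s ^ 2)
    (F : EuclideanSpace ℝ (Fin d1) →L[ℝ] EuclideanSpace ℝ (Fin d2))
    (hsF : s ^ 2 * ‖F‖ ^ 2 < 1)
    (p : EuclideanSpace ℝ (Fin d1)) (q : EuclideanSpace ℝ (Fin d2)) :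
    ⟪F p, q⟫ ≤ ‖p‖ ^ 2 / (2 * τ) + ‖q‖ ^ 2 / (2 * σ) := by
  have hF : s * ‖F‖ ≤ 1 := by
    have : (s * ‖F‖) ^ 2 ≤ 1 := by rw [mul_pow]; exact hsF.le
    exact (sq_le_one_iff₀ (by positivity)).1 this
  have h1 : ⟪F p, q⟫ ≤ ‖F‖ * ‖p‖ * ‖q‖ :=
    (real_inner_le_norm _ _).trans (by gcongr; exact F.le_opNorm p)
  -- AM-GM, with `s` as the geometric mean of `τ` and `σ`
  have h2 : 2 * s * (‖p‖ * ‖q‖) ≤ σ * ‖p‖ ^ 2 + τ * ‖q‖ ^ 2 := by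
    refine (sq_le_sq₀ (by positivity) (by positivity)).1 ?_
    have : (2 * s * (‖p‖ * ‖q‖)) ^ 2 = 4 * (τ * σ) * (‖p‖ ^ 2 * ‖q‖ ^ 2) := by
      rw [hτσ]; ring
    rw [this]
    nlinarith [sq_nonneg (σ * ‖p‖ ^ 2 - τ * ‖q‖ ^ 2)]
  have h3 : ‖p‖ ^ 2 / (2 * τ) + ‖q‖ ^ 2 / (2 * σ)
      = (σ * ‖p‖ ^ 2 + τ * ‖q‖ ^ 2) / (2 * s ^ 2) := by
    rw [← hτσ]; field_simp
  rw [h3, le_div_iff₀ (by positivity)]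
  calc ⟪F p, q⟫ * (2 * s ^ 2) ≤ ‖F‖ * ‖p‖ * ‖q‖ * (2 * s ^ 2) := by gcongr
    _ = (s * ‖F‖) * (2 * s * (‖p‖ * ‖q‖)) := by ring
    _ ≤ 1 * (2 * s * (‖p‖ * ‖q‖)) := by gcongr
    _ ≤ _ := by rw [one_mul]; exact h2

/-- Lemma 5.1: one-step decrease of the fixed-step PDHG Lyapunov function
when `f` is `μ`-strongly convex and `h` is `γ`-strongly convex. -/
theorem pdhg_strong_strong_decrease {d1 d2 : ℕ} (μ γ s τ σ : ℝ)
    (hμ : 0 < μ) (hγ : 0 < γ) (hs : 0 < s) (hτ : 0 < τ) (hσ : 0 < σ)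
    (hτσ : τ * σ = s ^ 2)
    (f : EuclideanSpace ℝ (Fin d1) → ℝ) (hf : StronglyConvexWith μ f)
    (h : EuclideanSpace ℝ (Fin d2) → ℝ) (hh : StronglyConvexWith γ h)
    (F : EuclideanSpace ℝ (Fin d1) →L[ℝ] EuclideanSpace ℝ (Fin d2))
    (hsF : s ^ 2 * ‖F‖ ^ 2 < 1)
    (x : ℕ → EuclideanSpace ℝ (Fin d1)) (y : ℕ → EuclideanSpace ℝ (Fin d2))
    (xs : EuclideanSpace ℝ (Fin d1)) (ys : EuclideanSpace ℝ (Fin d2))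
    (hdesc : ∀ k, IsSubgradAt f
      (-(τ⁻¹ • (x (k + 1) - x k) - (ContinuousLinearMap.adjoint F) (y (k + 1) - y k)
          + (ContinuousLinearMap.adjoint F) (y (k + 1)))) (x (k + 1)))
    (hasc : ∀ k, IsSubgradAt h
      (-(σ⁻¹ • (y (k + 1) - y k) - F (x (k + 1) - x k) - F (x (k + 1)))) (y (k + 1)))
    (hsadx : IsSubgradAt f (-(ContinuousLinearMap.adjoint F) ys) xs)
    (hsady : IsSubgradAt h (F xs) ys) :
    ∀ k, pdhgLyapFixed F τ σ x y xs ys (k + 1) - pdhgLyapFixed F τ σ x y xs ys k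
      ≤ -(μ * ‖x (k + 1) - xs‖ ^ 2 + γ * ‖y (k + 1) - ys‖ ^ 2) := by
  intro k
  have m1 := hf.strongly_mono (hdesc k) hsadx
  have m2 := hh.strongly_mono (hasc k) hsady
  have m3 := inner_le_step_energy hs hτ hσ hτσ F hsF (x (k + 1) - x k) (y (k + 1) - y k)
  unfold pdhgLyapFixed
  -- everything is expressed through `a = x_{k+1} - x*`, `b`, and the increments `p`, `q`
  have ex : x k - xs = (x (k + 1) - xs) - (x (k + 1) - x k) := by abel
  have ey : y k - ys = (y (k + 1) - ys) - (y (k + 1) - y k) := by abel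
  have eu : -(τ⁻¹ • (x (k + 1) - x k) - (ContinuousLinearMap.adjoint F) (y (k + 1) - y k)
      + (ContinuousLinearMap.adjoint F) (y (k + 1))) - -(ContinuousLinearMap.adjoint F) ys
      = -(τ⁻¹ • (x (k + 1) - x k)) + (ContinuousLinearMap.adjoint F) (y (k + 1) - y k)
        - (ContinuousLinearMap.adjoint F) (y (k + 1) - ys) := by
    rw [map_sub _ (y (k + 1)) ys]; abel
  have ev : -(σ⁻¹ • (y (k + 1) - y k) - F (x (k + 1) - x k) - F (x (k + 1))) - F xs
      = -(σ⁻¹ • (y (k + 1) - y k)) + F (x (k + 1) - x k) + F (x (k + 1) - xs) := by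
    rw [map_sub _ (x (k + 1)) xs]; abel
  rw [eu] at m1
  rw [ev] at m2
  rw [ex, ey]
  generalize x (k + 1) - xs = a at *
  generalize x (k + 1) - x k = p at *
  generalize y (k + 1) - ys = b at *
  generalize y (k + 1) - y k = q at *
  rw [inner_sub_left, inner_add_left, inner_neg_left, real_inner_smul_left,
    ContinuousLinearMap.adjoint_inner_left, ContinuousLinearMap.adjoint_inner_left,
    real_inner_comm (F a) q, real_inner_comm (F a) b] at m1
  rw [inner_add_left, inner_add_left, inner_neg_left, real_inner_smul_left] at m2
  rw [norm_sub_sq_real a p, norm_sub_sq_real b q, map_sub, inner_sub_left, inner_sub_right,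
    inner_sub_right, real_inner_comm p a, real_inner_comm q b]
  have e1 : (‖a‖ ^ 2 - 2 * ⟪p, a⟫ + ‖p‖ ^ 2) / (2 * τ)
      = ‖a‖ ^ 2 / (2 * τ) - τ⁻¹ * ⟪p, a⟫ + ‖p‖ ^ 2 / (2 * τ) := by field_simp
  have e2 : (‖b‖ ^ 2 - 2 * ⟪q, b⟫ + ‖q‖ ^ 2) / (2 * σ)
      = ‖b‖ ^ 2 / (2 * σ) - σ⁻¹ * ⟪q, b⟫ + ‖q‖ ^ 2 / (2 * σ) := by field_simp
  rw [e1, e2]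
  linarith
end

section
/- Let f : ℝ^{d1} → ℝ be μ-strongly convex and h : ℝ^{d2} → ℝ be γ-strongly convex (μ, γ > 0), F ∈ ℝ^{d2×d1}, and τ, σ > 0 with τσ = s² and s‖F‖ < 1. Suppose (x_k), (y_k) satisfy the fixed-step PDHG inclusions −[(x_{k+1} − x_k)/τ − Fᵀ(y_{k+1} − y_k) + Fᵀ y_{k+1}] ∈ ∂f(x_{k+1}), −[(y_{k+1} − y_k)/σ − F(x_{k+1} − x_k) − F x_{k+1}] ∈ ∂h(y_{k+1}), and that −Fᵀ y* ∈ ∂f(x*), F x* ∈ ∂h(y*). With E(k) = ‖x_k − x*‖²/(2τ) + ‖y_k − y*‖²/(2σ) − ⟨F(x_k − x*), y_k − y*⟩, for every k ≥ 0: E(k+1) ≤ ((1 + s‖F‖)/(1 + s‖F‖ + 2·min(μτ, γσ))) · E(k). -/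
/-!
Put `z = (x - x*, y - y*)` and let `M` be the symmetric form with
`E = ½⟨M z, z⟩`. Adding the two strong monotonicity inequalities (`strongly_monotone`, for `f` and
for `h`) between the new iterate and the saddle point gives
`-⟨M (z⁺ - z), z⁺⟩ ≥ μ‖x⁺ - x*‖² + γ‖y⁺ - y*‖²`, and expanding the square turns this into
`E(k) ≥ E(k+1) + μ‖x⁺ - x*‖² + γ‖y⁺ - y*‖² + ½⟨M (z⁺ - z), z⁺ - z⟩`.
Since `τσ = s²`, Young's inequality (`abs_inner_le_weighted`) compares `½⟨M z, z⟩` with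
`N = ‖x‖²/(2τ) + ‖y‖²/(2σ)`: it lies between `(1 - s‖F‖) N` and `(1 + s‖F‖) N`. The lower
bound makes the last term nonnegative, and the upper bound controls `E(k+1)` by
`(1 + s‖F‖) N(z⁺)`, while `μ‖x⁺ - x*‖² + γ‖y⁺ - y*‖² ≥ 2 min(μτ, γσ) N(z⁺)`.
-/


open scoped RealInnerProductSpace

/-- Subgradients of a strongly convex function form a strongly monotone relation. -/
theorem strongly_monotone {d : ℕ} {μ : ℝ} {f : EuclideanSpace ℝ (Fin d) → ℝ}
    (hf : StronglyConvexWith μ f) {v w p q : EuclideanSpace ℝ (Fin d)}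
    (hv : IsSubgradAt f v p) (hw : IsSubgradAt f w q) :
    μ * ‖p - q‖ ^ 2 ≤ ⟪v - w, p - q⟫ := by
  have h1 := hf p q v hv
  have h2 := hf q p w hw
  rw [← neg_sub p q, inner_neg_right, norm_neg] at h1
  rw [inner_sub_left]
  linarith

/-- Cauchy–Schwarz followed by Young's inequality with weights `τ`, `σ` whose product is `s²`. -/
theorem abs_inner_le_weighted {d1 d2 : ℕ} {s τ σ : ℝ}
    (hs : 0 < s) (hτ : 0 < τ) (hτσ : τ * σ = s ^ 2)
    (F : EuclideanSpace ℝ (Fin d1) →L[ℝ] EuclideanSpace ℝ (Fin d2))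
    (a : EuclideanSpace ℝ (Fin d1)) (b : EuclideanSpace ℝ (Fin d2)) :
    |⟪F a, b⟫| ≤ s * ‖F‖ * (‖a‖ ^ 2 / (2 * τ) + ‖b‖ ^ 2 / (2 * σ)) := by
  have h1 : |⟪F a, b⟫| ≤ ‖F‖ * (‖a‖ * ‖b‖) := by
    calc |⟪F a, b⟫| ≤ ‖F a‖ * ‖b‖ := abs_real_inner_le_norm _ _
      _ ≤ ‖F‖ * ‖a‖ * ‖b‖ := by gcongr; exact F.le_opNorm a
      _ = _ := by ring
  have h2 : ‖a‖ * ‖b‖ ≤ s * (‖a‖ ^ 2 / (2 * τ) + ‖b‖ ^ 2 / (2 * σ)) := by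
    have hσ' : σ = s ^ 2 / τ := by field_simp; linarith
    have h3 : s * (‖a‖ ^ 2 / (2 * τ) + ‖b‖ ^ 2 / (2 * σ)) - ‖a‖ * ‖b‖
        = (s * ‖a‖ - τ * ‖b‖) ^ 2 / (2 * s * τ) := by
      rw [hσ']; field_simp; ring
    have h4 : 0 ≤ (s * ‖a‖ - τ * ‖b‖) ^ 2 / (2 * s * τ) := by positivity
    linarith
  calc _ ≤ _ := h1
    _ ≤ ‖F‖ * (s * (‖a‖ ^ 2 / (2 * τ) + ‖b‖ ^ 2 / (2 * σ))) := by gcongr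
    _ = _ := by ring

/-- one-step linear contraction of the fixed-step PDHG Lyapunov function:
`E(k+1) ≤ ((1 + s‖F‖)/(1 + s‖F‖ + 2·min(μτ, γσ))) · E(k)`. -/
theorem pdhg_strong_strong_contraction {d1 d2 : ℕ} (μ γ s τ σ : ℝ)
    (hμ : 0 < μ) (hγ : 0 < γ) (hs : 0 < s) (hτ : 0 < τ) (hσ : 0 < σ)
    (hτσ : τ * σ = s ^ 2)
    (f : EuclideanSpace ℝ (Fin d1) → ℝ) (hf : StronglyConvexWith μ f)
    (h : EuclideanSpace ℝ (Fin d2) → ℝ) (hh : StronglyConvexWith γ h)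
    (F : EuclideanSpace ℝ (Fin d1) →L[ℝ] EuclideanSpace ℝ (Fin d2))
    (hsF : s * ‖F‖ < 1)
    (x : ℕ → EuclideanSpace ℝ (Fin d1)) (y : ℕ → EuclideanSpace ℝ (Fin d2))
    (xs : EuclideanSpace ℝ (Fin d1)) (ys : EuclideanSpace ℝ (Fin d2))
    (hdesc : ∀ k, IsSubgradAt f
      (-(τ⁻¹ • (x (k + 1) - x k) - (ContinuousLinearMap.adjoint F) (y (k + 1) - y k)
          + (ContinuousLinearMap.adjoint F) (y (k + 1)))) (x (k + 1)))
    (hasc : ∀ k, IsSubgradAt h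
      (-(σ⁻¹ • (y (k + 1) - y k) - F (x (k + 1) - x k) - F (x (k + 1)))) (y (k + 1)))
    (hsadx : IsSubgradAt f (-(ContinuousLinearMap.adjoint F) ys) xs)
    (hsady : IsSubgradAt h (F xs) ys) :
    ∀ k, pdhgLyapFixed F τ σ x y xs ys (k + 1)
      ≤ (1 + s * ‖F‖) / (1 + s * ‖F‖ + 2 * min (μ * τ) (γ * σ))
        * pdhgLyapFixed F τ σ x y xs ys k := by
  intro k
  have h1 := strongly_monotone hf (hdesc k) hsadx
  have h2 := strongly_monotone hh (hasc k) hsady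
  unfold pdhgLyapFixed
  obtain ⟨a, ha⟩ : ∃ a, a = x (k + 1) - xs := ⟨_, rfl⟩
  obtain ⟨b, hb⟩ : ∃ b, b = y (k + 1) - ys := ⟨_, rfl⟩
  obtain ⟨u, hu⟩ : ∃ u, u = x (k + 1) - x k := ⟨_, rfl⟩
  obtain ⟨w, hw⟩ : ∃ w, w = y (k + 1) - y k := ⟨_, rfl⟩
  have hv1 : -(τ⁻¹ • (x (k + 1) - x k) - (ContinuousLinearMap.adjoint F) (y (k + 1) - y k)
      + (ContinuousLinearMap.adjoint F) (y (k + 1))) - -(ContinuousLinearMap.adjoint F) ys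
      = -(τ⁻¹ • u) + (ContinuousLinearMap.adjoint F) w - (ContinuousLinearMap.adjoint F) b := by
    rw [hu, hw, hb]; simp only [map_sub]; abel
  have hv2 : -(σ⁻¹ • (y (k + 1) - y k) - F (x (k + 1) - x k) - F (x (k + 1))) - F xs
      = -(σ⁻¹ • w) + F u + F a := by
    rw [hu, hw, ha]; simp only [map_sub]; abel
  rw [hv1, ← ha] at h1
  rw [hv2, ← hb] at h2
  have hxk : x k - xs = a - u := by rw [ha, hu]; abel
  have hyk : y k - ys = b - w := by rw [hb, hw]; abel
  rw [hxk, hyk, ← ha, ← hb]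
  simp only [inner_sub_left, inner_add_left, inner_neg_left, real_inner_smul_left,
    ContinuousLinearMap.adjoint_inner_left] at h1 h2
  rw [norm_sub_sq_real, norm_sub_sq_real, map_sub, inner_sub_left, inner_sub_right,
    inner_sub_right]
  rw [real_inner_comm a u, real_inner_comm (F a) w, real_inner_comm (F a) b] at h1
  rw [real_inner_comm b w] at h2
  have hup := abs_inner_le_weighted hs hτ hτσ F a b
  have hlo := abs_inner_le_weighted hs hτ hτσ F u w
  have hF : 0 ≤ s * ‖F‖ := by positivity
  generalize s * ‖F‖ = r at *
  have hup' := (abs_le.mp hup).1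
  have hlo' := (abs_le.mp hlo).2
  have hN : 0 ≤ ‖u‖ ^ 2 / (2 * τ) + ‖w‖ ^ 2 / (2 * σ) := by positivity
  have hEd : 0 ≤ ‖u‖ ^ 2 / (2 * τ) + ‖w‖ ^ 2 / (2 * σ) - ⟪F u, w⟫ := by nlinarith
  obtain ⟨m, hm⟩ : ∃ m, m = min (μ * τ) (γ * σ) := ⟨_, rfl⟩
  have hm0 : 0 < m := by rw [hm]; exact lt_min (by positivity) (by positivity)
  have hm1 : m ≤ μ * τ := hm ▸ min_le_left _ _
  have hm2 : m ≤ γ * σ := hm ▸ min_le_right _ _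
  rw [← hm]
  have hma : 2 * m * (‖a‖ ^ 2 / (2 * τ)) ≤ μ * ‖a‖ ^ 2 := by
    calc 2 * m * (‖a‖ ^ 2 / (2 * τ)) ≤ 2 * (μ * τ) * (‖a‖ ^ 2 / (2 * τ)) := by gcongr
      _ = _ := by field_simp
  have hmb : 2 * m * (‖b‖ ^ 2 / (2 * σ)) ≤ γ * ‖b‖ ^ 2 := by
    calc 2 * m * (‖b‖ ^ 2 / (2 * σ)) ≤ 2 * (γ * σ) * (‖b‖ ^ 2 / (2 * σ)) := by gcongr
      _ = _ := by field_simp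
  have e1 : (‖a‖ ^ 2 - 2 * ⟪a, u⟫ + ‖u‖ ^ 2) / (2 * τ)
      = ‖a‖ ^ 2 / (2 * τ) - τ⁻¹ * ⟪a, u⟫ + ‖u‖ ^ 2 / (2 * τ) := by field_simp
  have e2 : (‖b‖ ^ 2 - 2 * ⟪b, w⟫ + ‖w‖ ^ 2) / (2 * σ)
      = ‖b‖ ^ 2 / (2 * σ) - σ⁻¹ * ⟪b, w⟫ + ‖w‖ ^ 2 / (2 * σ) := by field_simp
  rw [e1, e2, div_mul_eq_mul_div, le_div_iff₀ (by positivity)]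
  generalize ‖a‖ ^ 2 / (2 * τ) = A at *
  generalize ‖b‖ ^ 2 / (2 * σ) = B at *
  generalize ‖u‖ ^ 2 / (2 * τ) = U at *
  generalize ‖w‖ ^ 2 / (2 * σ) = W at *
  -- The descent inequality, with the new energy `A + B - ⟪F a, b⟫` on the left.
  have key : A + B - ⟪F a, b⟫ + 2 * m * (A + B) ≤ A - τ⁻¹ * ⟪a, u⟫ + U
      + (B - σ⁻¹ * ⟪b, w⟫ + W) - (⟪F a, b⟫ - ⟪F a, w⟫ - (⟪F u, b⟫ - ⟪F u, w⟫)) := by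
    linarith
  have k1 := mul_le_mul_of_nonneg_left key (by linarith : 0 ≤ 1 + r)
  have k2 : 2 * m * (A + B - ⟪F a, b⟫) ≤ 2 * m * ((1 + r) * (A + B)) := by
    gcongr; linarith
  linarith
end
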